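/- Let H be a real l × n matrix, h ∈ ℝˡ, b, c ∈ ℝⁿ, and α > 0. Suppose Z = { z ∈ ℝⁿ : H z ≥ h } is nonempty and bounded. Define g(v) = sInf { ‖v − α z − b‖ : z ∈ Z } (Euclidean norm), F = { y ∈ ℝⁿ : g(y) ≤ 0 }, and the predictability loss ℓᵖ(x) = sInf { ‖γ‖ : γ ∈ ℝⁿ, g(x+γ) ≤ 0, ⟨c, x+γ⟩ ≤ sInf { ⟨c, y⟩ : y ∈ F } }. Then for every x ∈ ℝⁿ, ℓᵖ(x) = sInf { ‖γ‖ : γ ∈ ℝⁿ, ∃ ζ ∈ ℝⁿ, ∃ λ ∈ ℝˡ, x + γ = ζ + b, H ζ ≥ α h, λ ≥ 0, Hᵀλ = α c, ⟨c, x + γ − b⟩ ≤ ⟨λ, h⟩ }, where the right-hand side is the feasible-value set of a convex program in (γ, ζ, λ). -/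

import Mathlib

open RealInnerProductSpace Matrix

open scoped Pointwise

/-!
Since `Z` is closed, `g y ≤ 0` says that `y` lies in `b + α Z`; with `ζ = y - b` this is the primal
half of the convex program. A point `y` of that set is optimal precisely when `⟪c, y - b⟫` is a
lower bound of the linear functional `⟪α c, ·⟫` on `Z`. By linear programming duality such a bound
is certified by a multiplier `λ ≥ 0` with `Hᵀ λ = α c` and `⟪c, y - b⟫ ≤ ⟪λ, h⟫`. Hence the two
minimization problems have the same feasible `γ`.
-/

section LinearInequalities

variable {𝕜 V ι : Type*} [Field 𝕜] [LinearOrder 𝕜] [IsStrictOrderedRing 𝕜]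
  [AddCommGroup V] [Module 𝕜 V]

/-- **Farkas' lemma** for finitely many linear functionals. -/
theorem exists_nonneg_eq_sum_smul_of_forall_nonneg (s : Finset ι) (a : ι → Module.Dual 𝕜 V)
    (c : Module.Dual 𝕜 V) (hc : ∀ x, (∀ i ∈ s, 0 ≤ a i x) → 0 ≤ c x) :
    ∃ μ : ι → 𝕜, 0 ≤ μ ∧ c = ∑ i ∈ s, μ i • a i := by
  classical
  induction s using Finset.induction_on generalizing V with
  | empty =>
    refine ⟨0, le_rfl, LinearMap.ext fun x => le_antisymm ?_ (hc x (by simp))⟩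
    simpa using hc (-x) (by simp)
  | insert j s hj ih =>
    simp only [Finset.forall_mem_insert] at hc
    suffices ∃ ν : 𝕜, 0 ≤ ν ∧ ∃ μ : ι → 𝕜, 0 ≤ μ ∧ c = ν • a j + ∑ i ∈ s, μ i • a i by
      obtain ⟨ν, hν, μ, hμ, rfl⟩ := this
      refine ⟨Function.update μ j ν, le_update_iff.2 ⟨hν, fun i _ => hμ i⟩, ?_⟩
      rw [Finset.sum_insert hj, Function.update_self]
      exact congrArg _ (Finset.sum_congr rfl fun i hi => by
        rw [Function.update_of_ne (ne_of_mem_of_not_mem hi hj)])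
    by_cases hs : ∀ x, (∀ i ∈ s, 0 ≤ a i x) → 0 ≤ c x
    · obtain ⟨μ, hμ, hsum⟩ := ih a c hs
      exact ⟨0, le_rfl, μ, hμ, by rwa [zero_smul, zero_add]⟩
    push Not at hs
    obtain ⟨x₀, hx₀, hcx₀⟩ := hs
    have hjx₀ : a j x₀ < 0 := by
      contrapose! hcx₀
      exact hc x₀ ⟨hcx₀, hx₀⟩
    -- On the kernel of `a j` the constraint indexed by `j` is vacuous.
    obtain ⟨μ, hμ, hsum⟩ := ih (fun i => a i ∘ₗ (a j).ker.subtype) (c ∘ₗ (a j).ker.subtype)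
      fun x hx => hc x ⟨x.2.ge, hx⟩
    have hker : ⨅ _ : Unit, (a j).ker ≤ (c - ∑ i ∈ s, μ i • a i).ker := by
      intro x hx
      have hsum_x := LinearMap.congr_fun hsum ⟨x, by simpa using hx⟩
      simpa [sub_eq_zero] using hsum_x
    obtain ⟨ν, hν⟩ : ∃ ν : 𝕜, ν • a j = c - ∑ i ∈ s, μ i • a i := by
      simpa [Submodule.mem_span_singleton] using mem_span_of_iInf_ker_le_ker hker
    refine ⟨ν, ?_, μ, hμ, sub_eq_iff_eq_add.1 hν.symm⟩
    have hsum₀ : 0 ≤ ∑ i ∈ s, μ i * a i x₀ :=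
      Finset.sum_nonneg fun i hi => mul_nonneg (hμ i) (hx₀ i hi)
    have hν₀ : ν * a j x₀ = c x₀ - ∑ i ∈ s, μ i * a i x₀ := by
      simpa using LinearMap.congr_fun hν x₀
    exact (pos_of_mul_neg_left (by linarith) hjx₀.le).le

theorem nonneg_of_forall_le_add_mul {p q w : 𝕜} (hw : ∀ s, 0 ≤ s → w ≤ p + s * q) :
    0 ≤ q := by
  by_contra! hq
  have hp : w ≤ p := by simpa using hw 0 le_rfl
  have hlt := hw ((p - w + 1) / -q) (div_nonneg (by linarith) (by linarith))
  rw [div_neg, neg_mul, div_mul_cancel₀ _ hq.ne] at hlt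
  linarith

theorem mul_le_apply_of_forall_mul_le_apply {a : ι → Module.Dual 𝕜 V} {h : ι → 𝕜}
    {c : Module.Dual 𝕜 V} {w : 𝕜} (hfeas : ∃ z, ∀ i, h i ≤ a i z)
    (hw : ∀ z, (∀ i, h i ≤ a i z) → w ≤ c z) {z : V} {t : 𝕜} (ht : 0 ≤ t)
    (hz : ∀ i, t * h i ≤ a i z) : t * w ≤ c z := by
  rcases ht.eq_or_lt with rfl | ht
  · -- Here `z` is a recession direction: moving along it from a feasible point stays feasible.
    obtain ⟨z₀, hz₀⟩ := hfeas
    rw [zero_mul]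
    refine nonneg_of_forall_le_add_mul (p := c z₀) (w := w) fun s hs => ?_
    have hray := hw (z₀ + s • z) fun i => by
      have hrec : 0 ≤ a i z := by simpa using hz i
      simpa using add_le_add (hz₀ i) (mul_nonneg hs hrec)
    simpa using hray
  · have hscaled := hw (t⁻¹ • z) fun i => by simpa [le_inv_mul_iff₀ ht] using hz i
    simpa [le_inv_mul_iff₀ ht] using hscaled

theorem forall_le_iff_exists_nonneg_sum_smul_eq [Fintype ι] {a : ι → Module.Dual 𝕜 V} {h : ι → 𝕜}
    (hfeas : ∃ z, ∀ i, h i ≤ a i z) (c : Module.Dual 𝕜 V) (w : 𝕜) :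
    (∀ z, (∀ i, h i ≤ a i z) → w ≤ c z) ↔
      ∃ μ : ι → 𝕜, 0 ≤ μ ∧ ∑ i, μ i • a i = c ∧ w ≤ ∑ i, μ i * h i := by
  constructor
  · intro hw
    -- Homogenization: the constraints become `0 ≤ t` and `t * h i ≤ a i z` on pairs `(z, t)`.
    let homog : Option ι → Module.Dual 𝕜 (V × 𝕜) := fun o =>
      o.elim (LinearMap.snd 𝕜 V 𝕜) fun i => (a i).coprod (-h i • LinearMap.id)
    obtain ⟨μ, hμ, hsum⟩ := exists_nonneg_eq_sum_smul_of_forall_nonneg Finset.univ homog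
      (c.coprod (-w • LinearMap.id)) fun ⟨z, t⟩ hzt => by
        have ht : 0 ≤ t := hzt none (Finset.mem_univ _)
        have hz : ∀ i, t * h i ≤ a i z := fun i => by
          simpa [homog, mul_comm] using hzt (some i) (Finset.mem_univ _)
        simpa [mul_comm] using mul_le_apply_of_forall_mul_le_apply hfeas hw ht hz
    have heval : ∀ z t, c z - w * t = μ none * t + ∑ i, μ (some i) * (a i z - h i * t) := by
      intro z t
      simpa [homog, Fintype.sum_option, sub_eq_add_neg] using LinearMap.congr_fun hsum (z, t)
    refine ⟨fun i => μ (some i), fun i => hμ _, LinearMap.ext fun z => ?_, ?_⟩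
    · simpa using (heval z 0).symm
    · have hval : -w = μ none - ∑ i, μ (some i) * h i := by
        simpa [sub_eq_add_neg] using heval 0 1
      have hslack : 0 ≤ μ none := hμ none
      linarith
  · rintro ⟨μ, hμ, rfl, hwμ⟩ z hz
    calc w ≤ ∑ i, μ i * h i := hwμ
      _ ≤ ∑ i, μ i * a i z := Finset.sum_le_sum fun i _ => mul_le_mul_of_nonneg_left (hz i) (hμ i)
      _ = (∑ i, μ i • a i) z := by simp

theorem forall_le_dotProduct_iff {κ : Type*} [Fintype ι] [Fintype κ] {H : Matrix ι κ 𝕜} {h : ι → 𝕜}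
    (hfeas : ∃ z, h ≤ H *ᵥ z) (c : κ → 𝕜) (w : 𝕜) :
    (∀ z, h ≤ H *ᵥ z → w ≤ c ⬝ᵥ z) ↔ ∃ μ : ι → 𝕜, 0 ≤ μ ∧ Hᵀ *ᵥ μ = c ∧ w ≤ μ ⬝ᵥ h := by
  have hcomb (μ : ι → 𝕜) : ∑ i, μ i • (LinearMap.proj i ∘ₗ H.mulVecLin) = dotProductBilin 𝕜 𝕜 c ↔
      Hᵀ *ᵥ μ = c := by
    rw [← dotProduct_eq_iff, LinearMap.ext_iff]
    refine forall_congr' fun z => ?_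
    rw [mulVec_transpose, ← dotProduct_mulVec]
    simp [dotProduct]
  simpa only [hcomb] using! forall_le_iff_exists_nonneg_sum_smul_eq
    (a := fun i => LinearMap.proj i ∘ₗ H.mulVecLin) hfeas (dotProductBilin 𝕜 𝕜 c) w

end LinearInequalities

section Polyhedron

variable {ι κ : Type*} [Fintype κ]

/-- The polyhedron `{z | H z ≥ h}`, inside Euclidean space so that its distance function is the
Euclidean one. -/
def polyhedron (H : Matrix ι κ ℝ) (h : EuclideanSpace ℝ ι) : Set (EuclideanSpace ℝ κ) :=
  {z | ∀ i, h i ≤ (H *ᵥ z) i}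

theorem isClosed_polyhedron (H : Matrix ι κ ℝ) (h : EuclideanSpace ℝ ι) :
    IsClosed (polyhedron H h) := by
  simp only [polyhedron, Set.ofPred_forall]
  exact isClosed_iInter fun i => isClosed_le continuous_const (by fun_prop)

theorem smul_polyhedron {α : ℝ} (hα : 0 < α) (H : Matrix ι κ ℝ) (h : EuclideanSpace ℝ ι) :
    α • polyhedron H h = polyhedron H (α • h) := by
  ext ζ
  simp [Set.mem_smul_set_iff_inv_smul_mem₀ hα.ne', polyhedron, mulVec_smul, le_inv_mul_iff₀ hα]

theorem forall_mem_polyhedron_le_inner_iff [Fintype ι] {H : Matrix ι κ ℝ} {h : EuclideanSpace ℝ ι}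
    (hne : (polyhedron H h).Nonempty) (c : EuclideanSpace ℝ κ) (w : ℝ) :
    (∀ z ∈ polyhedron H h, w ≤ ⟪c, z⟫) ↔
      ∃ lam : EuclideanSpace ℝ ι, (∀ i, 0 ≤ lam i) ∧ Hᵀ *ᵥ lam = c ∧ w ≤ ⟪lam, h⟫ := by
  obtain ⟨z₀, hz₀⟩ := hne
  have hduality := forall_le_dotProduct_iff ⟨z₀.ofLp, hz₀⟩ c.ofLp w
  rw [(WithLp.equiv 2 (κ → ℝ)).forall_congr_left, (WithLp.equiv 2 (ι → ℝ)).exists_congr_left]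
  simpa [polyhedron, Pi.le_def, EuclideanSpace.inner_eq_star_dotProduct, dotProduct_comm]
    using hduality

end Polyhedron

theorem sInf_dist_image_nonpos_iff {X : Type*} [PseudoMetricSpace X] {s : Set X} (hs : IsClosed s)
    (hne : s.Nonempty) (x : X) : sInf ((dist x ·) '' s) ≤ 0 ↔ x ∈ s := by
  rw [(Metric.isGLB_infDist hne).csInf_eq (hne.image _), hs.mem_iff_infDist_zero hne]
  exact Metric.infDist_nonneg.ge_iff_eq'

theorem sInf_norm_sub_nonpos_iff {E : Type*} [NormedAddCommGroup E] [NormedSpace ℝ E] {Z : Set E}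
    (hZ : IsClosed Z) (hne : Z.Nonempty) (α : ℝ) (b y : E) :
    sInf {r | ∃ z ∈ Z, r = ‖y - α • z - b‖} ≤ 0 ↔ y ∈ b +ᵥ α • Z := by
  have hdist : {r | ∃ z ∈ Z, r = ‖y - α • z - b‖} = (dist y ·) '' (b +ᵥ α • Z) := by
    ext r
    simp [Set.mem_vadd_set, Set.mem_smul_set, dist_eq_norm, sub_sub, add_comm b, eq_comm (a := r)]
  rw [hdist, sInf_dist_image_nonpos_iff ((hZ.smul₀ α).vadd b) (hne.smul_set.vadd_set)]

theorem inner_le_sInf_iff {E : Type*} [SeminormedAddCommGroup E] [InnerProductSpace ℝ E] {Z : Set E}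
    {c : E} (hne : Z.Nonempty) (hbdd : BddBelow ((fun z => ⟪c, z⟫) '' Z)) {α : ℝ} (hα : 0 ≤ α)
    (b y : E) :
    ⟪c, y⟫ ≤ sInf ((fun z => ⟪c, z⟫) '' (b +ᵥ α • Z)) ↔ ∀ z ∈ Z, ⟪c, y - b⟫ ≤ ⟪α • c, z⟫ := by
  have hvalues : (fun z => ⟪c, z⟫) '' (b +ᵥ α • Z) =
      (fun r => ⟪c, b⟫ + α * r) '' ((fun z => ⟪c, z⟫) '' Z) := by
    simp [← Set.image_vadd, ← Set.image_smul, Set.image_image, inner_add_right, inner_smul_right]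
  have hmono : Monotone fun r => ⟪c, b⟫ + α * r := fun r s hrs => by dsimp only; gcongr
  rw [hvalues, le_csInf_iff (hmono.map_bddBelow hbdd) ((hne.image _).image _)]
  simp [inner_sub_right, inner_smul_left, add_comm]

theorem mem_and_inner_le_sInf_iff_exists_multiplier {ι κ : Type*} [Fintype ι] [Fintype κ]
    {H : Matrix ι κ ℝ} {h : EuclideanSpace ℝ ι} {c : EuclideanSpace ℝ κ} {α : ℝ} (hα : 0 < α)
    (hne : (polyhedron H h).Nonempty)
    (hbdd : BddBelow ((fun z => ⟪c, z⟫) '' polyhedron H h)) (b y : EuclideanSpace ℝ κ) :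
    (y ∈ b +ᵥ α • polyhedron H h ∧
        ⟪c, y⟫ ≤ sInf ((fun z => ⟪c, z⟫) '' (b +ᵥ α • polyhedron H h))) ↔
      ∃ ζ : EuclideanSpace ℝ κ, ∃ lam : EuclideanSpace ℝ ι, y = ζ + b ∧
        (∀ i, α * h i ≤ (H *ᵥ ζ) i) ∧ (∀ i, 0 ≤ lam i) ∧ (Hᵀ *ᵥ lam = fun i => α * c i) ∧
          ⟪c, y - b⟫ ≤ ⟪lam, h⟫ := by
  have hprimal : y ∈ b +ᵥ α • polyhedron H h ↔
      ∃ ζ : EuclideanSpace ℝ κ, y = ζ + b ∧ ∀ i, α * h i ≤ (H *ᵥ ζ) i := by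
    rw [smul_polyhedron hα]
    simp [Set.mem_vadd_set, polyhedron, and_comm, add_comm b, eq_comm]
  rw [hprimal, inner_le_sInf_iff hne hbdd hα.le, forall_mem_polyhedron_le_inner_iff hne,
    ← exists_and_right]
  simp only [and_assoc, exists_and_left]
  rfl

theorem predictability_loss_convex_reformulation_general
    {ι κ : Type*} [Fintype ι] [Fintype κ] (H : Matrix ι κ ℝ) (h : EuclideanSpace ℝ ι)
    (b c : EuclideanSpace ℝ κ) (α : ℝ) (hα : 0 < α)
    (Z : Set (EuclideanSpace ℝ κ)) (hZ : Z = {z : EuclideanSpace ℝ κ | ∀ i, h i ≤ (H *ᵥ z) i})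
    (hZne : Z.Nonempty) (hcZ : BddBelow ((fun z => ⟪c, z⟫) '' Z))
    (g : EuclideanSpace ℝ κ → ℝ)
    (hg : ∀ v, g v = sInf {r : ℝ | ∃ z ∈ Z, r = ‖v - α • z - b‖})
    (F : Set (EuclideanSpace ℝ κ)) (hF : F = {y | g y ≤ 0})
    (ℓp : EuclideanSpace ℝ κ → ℝ)
    (hℓp : ∀ x, ℓp x = sInf {r : ℝ | ∃ γ : EuclideanSpace ℝ κ,
      r = ‖γ‖ ∧ g (x + γ) ≤ 0 ∧ ⟪c, x + γ⟫ ≤ sInf {r' : ℝ | ∃ y ∈ F, r' = ⟪c, y⟫}}) :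
    ∀ x : EuclideanSpace ℝ κ,
      ℓp x = sInf {r : ℝ | ∃ γ : EuclideanSpace ℝ κ,
        r = ‖γ‖ ∧ ∃ ζ : EuclideanSpace ℝ κ, ∃ lam : EuclideanSpace ℝ ι,
          x + γ = ζ + b ∧ (∀ i, α * h i ≤ (H *ᵥ ζ) i) ∧ (∀ i, 0 ≤ lam i) ∧
          (Hᵀ *ᵥ lam = fun i => α * c i) ∧ ⟪c, x + γ - b⟫ ≤ ⟪lam, h⟫} := by
  intro x
  obtain rfl : Z = polyhedron H h := hZ
  have hg_nonpos : ∀ y, g y ≤ 0 ↔ y ∈ b +ᵥ α • polyhedron H h := fun y => by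
    rw [hg, sInf_norm_sub_nonpos_iff (isClosed_polyhedron H h) hZne]
  obtain rfl : F = b +ᵥ α • polyhedron H h := hF.trans (Set.ext hg_nonpos)
  have hvalues : {r' : ℝ | ∃ y ∈ b +ᵥ α • polyhedron H h, r' = ⟪c, y⟫} =
      (fun y => ⟪c, y⟫) '' (b +ᵥ α • polyhedron H h) :=
    Set.ext fun r => exists_congr fun y => and_congr_right' eq_comm
  simp only [hℓp, hvalues, hg_nonpos, mem_and_inner_le_sInf_iff_exists_multiplier hα hZne hcZ]

/-- **Convex reformulation of the predictability loss (scaling-and-translation class).**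
With primitive set `Z = { z : H z ≥ h }` nonempty and bounded, `α > 0`, constraint
function `g v = inf { ‖v − α z − b‖ : z ∈ Z }`, feasible set `F = { y : g y ≤ 0 }`
and recovered objective `⟪c, ·⟫`, the predictability loss equals the optimal value of
the convex program in `(γ, ζ, λ)` obtained by the substitution `ζ = α z`. -/
theorem predictability_loss_convex_reformulation
    (l n : ℕ) (H : Matrix (Fin l) (Fin n) ℝ) (h : EuclideanSpace ℝ (Fin l))
    (b c : EuclideanSpace ℝ (Fin n)) (α : ℝ) (hα : 0 < α)
    (Z : Set (EuclideanSpace ℝ (Fin n)))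
    (hZ : Z = {z : EuclideanSpace ℝ (Fin n) | ∀ i, h i ≤ H.mulVec z i})
    (hZne : Z.Nonempty) (hZbdd : Bornology.IsBounded Z)
    (g : EuclideanSpace ℝ (Fin n) → ℝ)
    (hg : ∀ v, g v = sInf {r : ℝ | ∃ z ∈ Z, r = ‖v - α • z - b‖})
    (F : Set (EuclideanSpace ℝ (Fin n))) (hF : F = {y | g y ≤ 0})
    (ℓp : EuclideanSpace ℝ (Fin n) → ℝ)
    (hℓp : ∀ x, ℓp x = sInf {r : ℝ | ∃ γ : EuclideanSpace ℝ (Fin n),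
      r = ‖γ‖ ∧ g (x + γ) ≤ 0 ∧
      ⟪c, x + γ⟫ ≤ sInf {r' : ℝ | ∃ y ∈ F, r' = ⟪c, y⟫}}) :
    ∀ x : EuclideanSpace ℝ (Fin n),
      ℓp x = sInf {r : ℝ | ∃ γ : EuclideanSpace ℝ (Fin n),
        r = ‖γ‖ ∧ ∃ ζ : EuclideanSpace ℝ (Fin n), ∃ lam : EuclideanSpace ℝ (Fin l),
          x + γ = ζ + b ∧
          (∀ i, α * h i ≤ H.mulVec ζ i) ∧
          (∀ i, 0 ≤ lam i) ∧
          (Hᵀ.mulVec lam = fun i => α * c i) ∧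
          ⟪c, x + γ - b⟫ ≤ ⟪lam, h⟫} := by
  have hcZ : BddBelow ((fun z => ⟪c, z⟫) '' Z) :=
    ((innerSL ℝ c).lipschitz.isBounded_image hZbdd).bddBelow
  exact predictability_loss_convex_reformulation_general H h b c α hα Z hZ hZne hcZ g hg F hF ℓp hℓp
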